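/- Let P_0, P_1, …, P_{n−1} be points of ℝ² with coordinates P_i = (x_i, y_i), indices taken modulo n (n ≥ 3), and suppose that for every i the triple (0, P_i, P_{i+1}) (where 0 is the origin) is affinely independent. Then Σ_{i=0}^{n−1} Area(0, P_i, P_{i+1})·CC(0, P_i, P_{i+1}) = (1/4)·( Σ_{i=0}^{n−1} y_i·(x_{i−1}² + y_{i−1}² − x_{i+1}² − y_{i+1}²), −Σ_{i=0}^{n−1} x_i·(x_{i−1}² + y_{i−1}² − x_{i+1}² − y_{i+1}²) ). -/

import Mathlib

/-- The signed area of the ordered triple `(A, B, C)` of points of `ℝ²`: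
`(1/2) · det(B − A, C − A)`. -/
noncomputable def sarea (A B C : EuclideanSpace ℝ (Fin 2)) : ℝ :=
  ((B 0 - A 0) * (C 1 - A 1) - (B 1 - A 1) * (C 0 - A 0)) / 2

/-! If `c` is equidistant from `0`, `a` and `b`, then `⟪c, a⟫ = ‖a‖² / 2` and `⟪c, b⟫ = ‖b‖² / 2`.
Writing `ω` for the area form and `J` for the rotation by a right angle, the planar identity
`ω a b • c = ⟪c, b⟫ • J a - ⟪c, a⟫ • J b` therefore expresses the area-weighted circumcenter of the
triangle `0 a b` polynomially in `a` and `b`, and summation by parts along the polygon collects the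
coefficient of each `J (P i)`. -/

section CyclicSum

variable {ι R M : Type*} [Fintype ι] [Ring R] [AddCommGroup M] [Module R M]

theorem sum_perm_smul_sub_smul_perm (σ : Equiv.Perm ι) (f : ι → R) (v : ι → M) :
    ∑ i, (f (σ i) • v i - f i • v (σ i)) = ∑ i, (f (σ i) - f (σ.symm i)) • v i := by
  have reindex : ∑ i, f i • v (σ i) = ∑ i, f (σ.symm i) • v i :=
    Fintype.sum_equiv σ _ _ fun i => by rw [σ.symm_apply_apply]
  simp only [sub_smul, Finset.sum_sub_distrib, reindex]

end CyclicSum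

section InnerProductSpace

open scoped RealInnerProductSpace

variable {E : Type*} [NormedAddCommGroup E] [InnerProductSpace ℝ E]

theorem inner_eq_norm_sq_div_two_of_dist_zero_eq {a c : E} (h : dist c 0 = dist c a) :
    ⟪c, a⟫ = ‖a‖ ^ 2 / 2 := by
  simpa using AffineSubspace.mem_perpBisector_iff_inner_eq.1
    (AffineSubspace.mem_perpBisector_iff_dist_eq.2 h)

variable [Fact (Module.finrank ℝ E = 2)] (o : Orientation ℝ E (Fin 2))

theorem areaForm_smul_eq_inner_smul_rightAngleRotation_sub (a b c : E) :
    o.areaForm a b • c =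
      ⟪c, b⟫ • o.rightAngleRotation a - ⟪c, a⟫ • o.rightAngleRotation b := by
  rcases eq_or_ne c 0 with rfl | hc
  · simp
  refine InnerProductSpace.ext_inner_right_basis (o.basisRightAngleRotation c hc) ?_
  simp only [Fin.forall_fin_two, o.coe_basisRightAngleRotation, Matrix.cons_val_zero,
    Matrix.cons_val_one, Matrix.cons_val_fin_one, inner_sub_left, real_inner_smul_left,
    o.inner_rightAngleRotation_left]
  constructor
  · rw [real_inner_self_eq_norm_sq, o.areaForm_swap a c, o.areaForm_swap b c]
    linarith [o.inner_mul_areaForm_sub c a b]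
  · rw [o.inner_rightAngleRotation_right, o.areaForm_apply_self,
      o.areaForm_rightAngleRotation_right, o.areaForm_rightAngleRotation_right,
      real_inner_comm c a, real_inner_comm c b]
    ring

theorem areaForm_div_two_smul_of_dist_zero_eq {a b c : E} (ha : dist c 0 = dist c a)
    (hb : dist c 0 = dist c b) :
    (o.areaForm a b / 2) • c =
      (1 / 4 : ℝ) • (‖b‖ ^ 2 • o.rightAngleRotation a - ‖a‖ ^ 2 • o.rightAngleRotation b) := by
  rw [div_eq_inv_mul, mul_smul, areaForm_smul_eq_inner_smul_rightAngleRotation_sub,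
    inner_eq_norm_sq_div_two_of_dist_zero_eq ha, inner_eq_norm_sq_div_two_of_dist_zero_eq hb]
  module

theorem ccm_explicit_formula_general {ι : Type*} [Fintype ι] (σ : Equiv.Perm ι) (P cc : ι → E)
    (hcc : ∀ i, dist (cc i) 0 = dist (cc i) (P i) ∧ dist (cc i) 0 = dist (cc i) (P (σ i))) :
    ∑ i, (o.areaForm (P i) (P (σ i)) / 2) • cc i =
      (1 / 4 : ℝ) • ∑ i, (‖P (σ i)‖ ^ 2 - ‖P (σ.symm i)‖ ^ 2) • o.rightAngleRotation (P i) := by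
  simp only [fun i => areaForm_div_two_smul_of_dist_zero_eq o (hcc i).1 (hcc i).2,
    ← Finset.smul_sum]
  rw [sum_perm_smul_sub_smul_perm σ (fun i => ‖P i‖ ^ 2) fun i => o.rightAngleRotation (P i)]

end InnerProductSpace

section Coordinates

open scoped EuclideanSpace

/-- The orientation of `ℝ²` for which the standard basis is positively oriented; it links the signed
area `sarea` to the area form of an oriented plane. -/
noncomputable def stdOrientation : Orientation ℝ (EuclideanSpace ℝ (Fin 2)) (Fin 2) :=
  (EuclideanSpace.basisFun (Fin 2) ℝ).toBasis.orientation

theorem stdOrientation_areaForm (a b : EuclideanSpace ℝ (Fin 2)) :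
    stdOrientation.areaForm a b = a 0 * b 1 - a 1 * b 0 := by
  rw [Orientation.areaForm_to_volumeForm,
    stdOrientation.volumeForm_robust (EuclideanSpace.basisFun (Fin 2) ℝ) rfl,
    Module.Basis.det_apply, Matrix.det_fin_two]
  simp [Module.Basis.toMatrix_apply, mul_comm]

theorem stdOrientation_rightAngleRotation (a : EuclideanSpace ℝ (Fin 2)) :
    stdOrientation.rightAngleRotation a = !₂[-a 1, a 0] := by
  refine ext_inner_right ℝ fun b => ?_
  rw [Orientation.inner_rightAngleRotation_left, stdOrientation_areaForm]
  simp only [PiLp.inner_apply, RCLike.inner_apply, Real.ringHom_apply, Fin.sum_univ_two,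
    Matrix.cons_val_zero, Matrix.cons_val_one, Matrix.cons_val_fin_one]
  ring

theorem sarea_zero_eq_areaForm_div_two (a b : EuclideanSpace ℝ (Fin 2)) :
    sarea 0 a b = stdOrientation.areaForm a b / 2 := by
  simp only [sarea, stdOrientation_areaForm, PiLp.zero_apply, sub_zero]

theorem sum_sarea_zero_smul_of_dist_zero_eq {ι : Type*} [Fintype ι] (σ : Equiv.Perm ι)
    (P cc : ι → EuclideanSpace ℝ (Fin 2))
    (hcc : ∀ i, dist (cc i) 0 = dist (cc i) (P i) ∧ dist (cc i) 0 = dist (cc i) (P (σ i))) :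
    ∑ i, sarea 0 (P i) (P (σ i)) • cc i =
      (1 / 4 : ℝ) • ∑ i, (‖P (σ i)‖ ^ 2 - ‖P (σ.symm i)‖ ^ 2) • !₂[-P i 1, P i 0] := by
  simp only [sarea_zero_eq_areaForm_div_two, ← stdOrientation_rightAngleRotation]
  exact ccm_explicit_formula_general stdOrientation σ P cc hcc

end Coordinates

/-- The explicit coordinate formula for the (area-weighted) circumcenter of mass of the polygon
`P_0 P_1 ⋯ P_{n−1}`, computed from the fan triangulation with apex at the origin. -/
theorem ccm_explicit_formula (n : ℕ) [NeZero n] (hn : 3 ≤ n)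
    (P : ZMod n → EuclideanSpace ℝ (Fin 2))
    (hP : ∀ i : ZMod n, AffineIndependent ℝ ![(0 : EuclideanSpace ℝ (Fin 2)), P i, P (i + 1)])
    (cc : ZMod n → EuclideanSpace ℝ (Fin 2))
    (hcc : ∀ i : ZMod n, dist (cc i) (0 : EuclideanSpace ℝ (Fin 2)) = dist (cc i) (P i) ∧
      dist (cc i) (0 : EuclideanSpace ℝ (Fin 2)) = dist (cc i) (P (i + 1))) :
    (∑ i : ZMod n, sarea 0 (P i) (P (i + 1)) • cc i) 0 =
        (1 / 4) * ∑ i : ZMod n, P i 1 *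
          ((P (i - 1) 0) ^ 2 + (P (i - 1) 1) ^ 2 - (P (i + 1) 0) ^ 2 - (P (i + 1) 1) ^ 2)
    ∧ (∑ i : ZMod n, sarea 0 (P i) (P (i + 1)) • cc i) 1 =
        (1 / 4) * ∑ i : ZMod n, -(P i 0) *
          ((P (i - 1) 0) ^ 2 + (P (i - 1) 1) ^ 2 - (P (i + 1) 0) ^ 2 - (P (i + 1) 1) ^ 2) := by
  have vector_formula := sum_sarea_zero_smul_of_dist_zero_eq (Equiv.addRight 1) P cc hcc
  simp only [Equiv.coe_addRight, Equiv.addRight_symm, ← sub_eq_add_neg,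
    EuclideanSpace.real_norm_sq_eq, Fin.sum_univ_two] at vector_formula
  rw [vector_formula]
  constructor
  all_goals
    simp only [PiLp.smul_apply, WithLp.ofLp_sum, Finset.sum_apply, smul_eq_mul]
    congr! 2 with i
    simp only [Matrix.cons_val_zero, Matrix.cons_val_one, Matrix.cons_val_fin_one]
    ring
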